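/- arXiv:1601.04749 — 13 statements merged into one kernel-verified Lean document; each statement's English description precedes it below -/
import Mathlib

section
/- Let R = [r_{i,k}] be a rate allocation matrix for backlogged set B. Then R is CM4-fair if and only if for every backlogged user j ∈ B, every user i, and every server k, the conditions r_{i,k} > 0 and π_{j,k} = 1 together imply r_j/φ_j ≥ r_i/φ_i, where r_i = Σ_k r_{i,k}. -/
open Finset

/-- A rate allocation matrix: nonnegative, zero for non-backlogged users,
zero for ineligible pairs, and work-conserving at each server. -/
def IsRateAlloc {N K : ℕ} (B : Set (Fin N)) (π : Fin N → Fin K → Bool)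
    (ρ : Fin K → ℝ) (R : Fin N → Fin K → ℝ) : Prop :=
  (∀ i k, 0 ≤ R i k) ∧
  (∀ i k, i ∉ B → R i k = 0) ∧
  (∀ i k, π i k = false → R i k = 0) ∧
  (∀ k, (∃ i ∈ B, π i k = true) → ∑ i, R i k = ρ k)

/-- Total service rate of user `i`. -/
noncomputable def totalRate {N K : ℕ} (R : Fin N → Fin K → ℝ) (i : Fin N) : ℝ :=
  ∑ k, R i k

/-- Constrained multi-user multi-server max-min (CM4) fairness. -/
def CM4Fair {N K : ℕ} (B : Set (Fin N)) (π : Fin N → Fin K → Bool)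
    (ρ : Fin K → ℝ) (φ : Fin N → ℝ) (R : Fin N → Fin K → ℝ) : Prop :=
  IsRateAlloc B π ρ R ∧
  ∀ R' : Fin N → Fin K → ℝ, IsRateAlloc B π ρ R' →
    ∀ i, totalRate R i / φ i < totalRate R' i / φ i →
      ∃ j, totalRate R j / φ j ≤ totalRate R i / φ i ∧
        totalRate R' j / φ j < totalRate R j / φ j

/-- Theorem 1: `R` is CM4-fair iff for every backlogged user `j`, every user
`i` and every server `k`, `r_{i,k} > 0` and `π_{j,k} = 1` imply
`r_j/φ_j ≥ r_i/φ_i`. -/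
theorem cm4fair_iff {N K : ℕ} (hN : 0 < N) (hK : 0 < K)
    (B : Set (Fin N)) (π : Fin N → Fin K → Bool) (ρ : Fin K → ℝ) (φ : Fin N → ℝ)
    (hφ : ∀ i, 0 < φ i) (hρ : ∀ k, 0 ≤ ρ k)
    (hrow : ∀ i, ∃ k, π i k = true) (hcol : ∀ k, ∃ i, π i k = true)
    (R : Fin N → Fin K → ℝ) (hR : IsRateAlloc B π ρ R) :
    CM4Fair B π ρ φ R ↔
      ∀ j ∈ B, ∀ (i : Fin N) (k : Fin K), 0 < R i k → π j k = true →
        totalRate R i / φ i ≤ totalRate R j / φ j := by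
  classical
  obtain ⟨h0, hB, hπ, hs⟩ := id hR
  constructor
  · rintro ⟨-, hf⟩ j hj i k hik hjk
    by_contra hlt
    rw [not_le] at hlt
    have hij : i ≠ j := by
      rintro rfl
      exact lt_irrefl _ hlt
    have hiB : i ∈ B := by
      by_contra h
      exact hik.ne' (hB i k h)
    have hiπ : π i k = true := by
      by_contra h
      exact hik.ne' (hπ i k (by simpa using h))
    let R' : Fin N → Fin K → ℝ := fun a b => R a b +
      (if b = k then (if a = j then R i k else 0) - (if a = i then R i k else 0) else 0)
    have hR' : IsRateAlloc B π ρ R' := by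
      refine ⟨?_, ?_, ?_, ?_⟩
      · intro a b
        have := h0 a b
        simp only [R']
        split_ifs <;> subst_vars <;> linarith
      · intro a b ha
        have h1 : a ≠ j := by rintro rfl; exact ha hj
        have h2 : a ≠ i := by rintro rfl; exact ha hiB
        simp [R', h1, h2, hB a b ha]
      · intro a b ha
        by_cases hb : b = k
        · subst hb
          have h1 : a ≠ j := by rintro rfl; simp [hjk] at ha
          have h2 : a ≠ i := by rintro rfl; simp [hiπ] at ha
          simp [R', h1, h2, hπ a b ha]
        · simp [R', hb, hπ a b ha]
      · intro b hb
        rw [← hs b hb]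
        by_cases hbk : b = k
        · simp [R', hbk, Finset.sum_add_distrib]
        · simp [R', hbk]
    have ht : ∀ a, totalRate R' a = totalRate R a +
        ((if a = j then R i k else 0) - (if a = i then R i k else 0)) := by
      intro a
      simp [totalRate, R', Finset.sum_add_distrib]
    obtain ⟨l, hl1, hl2⟩ := hf R' hR' j (by
      rw [ht, div_lt_div_iff_of_pos_right (hφ j)]
      simp [hij.symm, hik])
    rw [div_lt_div_iff_of_pos_right (hφ l), ht] at hl2
    by_cases hli : l = i
    · subst hli
      linarith
    · rw [if_neg hli] at hl2
      split_ifs at hl2 <;> linarith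
  · intro hc
    refine ⟨hR, ?_⟩
    intro R' hR' i hi
    obtain ⟨h0', hB', hπ', hs'⟩ := id hR'
    by_contra hno
    push Not at hno
    let S : Finset (Fin N) := Finset.univ.filter
      (fun j => totalRate R j / φ j ≤ totalRate R i / φ i)
    have hlt : ∑ j ∈ S, totalRate R j < ∑ j ∈ S, totalRate R' j := by
      apply Finset.sum_lt_sum
      · intro j hj
        have := hno j (by simpa [S] using hj)
        exact (div_le_div_iff_of_pos_right (hφ j)).1 this
      · exact ⟨i, by simp [S], (div_lt_div_iff_of_pos_right (hφ i)).1 hi⟩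
    simp only [totalRate] at hlt
    rw [Finset.sum_comm, Finset.sum_comm (s := S)] at hlt
    obtain ⟨k, -, hk⟩ := Finset.exists_lt_of_sum_lt hlt
    have hpos : 0 < ∑ j ∈ S, R' j k :=
      lt_of_le_of_lt (Finset.sum_nonneg fun j _ => h0 j k) hk
    obtain ⟨j, hjS, hj⟩ := Finset.exists_lt_of_sum_lt
      (s := S) (f := fun _ => (0 : ℝ)) (g := fun j => R' j k) (by simpa using hpos)
    have hjB : j ∈ B := by
      by_contra h
      exact hj.ne' (hB' j k h)
    have hjπ : π j k = true := by
      by_contra h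
      exact hj.ne' (hπ' j k (by simpa using h))
    have e1 := hs k ⟨j, hjB, hjπ⟩
    have e2 := hs' k ⟨j, hjB, hjπ⟩
    rw [← Finset.sum_add_sum_compl S] at e1 e2
    have hn : 0 ≤ ∑ l ∈ Sᶜ, R' l k := Finset.sum_nonneg fun l _ => h0' l k
    have hpos2 : 0 < ∑ l ∈ Sᶜ, R l k := by linarith
    obtain ⟨l, hlS, hl⟩ := Finset.exists_lt_of_sum_lt
      (s := Sᶜ) (f := fun _ => (0 : ℝ)) (g := fun l => R l k) (by simpa using hpos2)
    have h1 := hc j hjB l k hl hjπ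
    have h2 : totalRate R j / φ j ≤ totalRate R i / φ i := by simpa [S] using hjS
    have h3 : totalRate R i / φ i < totalRate R l / φ l := by simpa [S] using hlS
    linarith
end

section
/- If R and R' are both CM4-fair rate allocation matrices for the same backlogged set B, server rates ρ, eligibility matrix Π and weights φ, then every user receives the same total rate under both: r_i = r'_i for every user i (equivalently, the normalized rate r_i/φ_i of each user is uniquely determined). -/
open Finset

/-- Uniqueness of total rates: any two CM4-fair rate allocation matrices for
the same data give every user the same total rate. -/
theorem cm4fair_rate_unique {N K : ℕ} (hN : 0 < N) (hK : 0 < K)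
    (B : Set (Fin N)) (π : Fin N → Fin K → Bool) (ρ : Fin K → ℝ) (φ : Fin N → ℝ)
    (hφ : ∀ i, 0 < φ i) (hρ : ∀ k, 0 ≤ ρ k)
    (hrow : ∀ i, ∃ k, π i k = true) (hcol : ∀ k, ∃ i, π i k = true)
    (R R' : Fin N → Fin K → ℝ)
    (hR : CM4Fair B π ρ φ R) (hR' : CM4Fair B π ρ φ R') :
    ∀ i, totalRate R i = totalRate R' i := by
  by_contra hne
  push Not at hne
  obtain ⟨i0, hi0⟩ := hne
  have inj : ∀ i, totalRate R i / φ i = totalRate R' i / φ i →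
      totalRate R i = totalRate R' i := fun i h =>
    (div_left_inj' (hφ i).ne').1 h
  obtain ⟨i, hi, hmin⟩ := Set.exists_min_image
    {i | totalRate R i ≠ totalRate R' i}
    (fun i => min (totalRate R i / φ i) (totalRate R' i / φ i))
    (Set.toFinite _) ⟨i0, hi0⟩
  rcases lt_trichotomy (totalRate R i / φ i) (totalRate R' i / φ i) with h | h | h
  · obtain ⟨j, h1, h2⟩ := hR.2 R' hR'.1 i h
    have h3 := hmin j (fun e => by rw [e] at h2; exact lt_irrefl _ h2)
    simp only [min_eq_left h.le, min_eq_right h2.le] at h3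
    linarith
  · exact hi (inj i h)
  · obtain ⟨j, h1, h2⟩ := hR'.2 R hR.1 i h
    have h3 := hmin j (fun e => by rw [e] at h2; exact lt_irrefl _ h2)
    simp only [min_eq_right h.le, min_eq_left h2.le] at h3
    linarith
end

section
/- For every choice of backlogged set B, server rates ρ_k ≥ 0, eligibility matrix Π (with every row and column containing a 1) and positive weights φ_i, there exists at least one CM4-fair rate allocation matrix. -/
open Finset

theorem cm4_isCompact {N K : ℕ} (B : Set (Fin N)) (π : Fin N → Fin K → Bool)
    (ρ : Fin K → ℝ) : IsCompact {R | IsRateAlloc B π ρ R} := by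
  apply IsCompact.of_isClosed_subset
    (isCompact_Icc (a := (fun _ _ => 0 : Fin N → Fin K → ℝ)) (b := fun _ k => |ρ k|))
  · unfold IsRateAlloc
    simp only [Set.ofPred_and, Set.ofPred_forall]
    refine IsClosed.inter ?_ (IsClosed.inter ?_ (IsClosed.inter ?_ ?_))
    · exact isClosed_iInter fun i => isClosed_iInter fun k =>
        isClosed_le continuous_const (by fun_prop)
    · exact isClosed_iInter fun i => isClosed_iInter fun k => isClosed_iInter fun _ =>
        isClosed_eq (by fun_prop) continuous_const
    · exact isClosed_iInter fun i => isClosed_iInter fun k => isClosed_iInter fun _ =>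
        isClosed_eq (by fun_prop) continuous_const
    · exact isClosed_iInter fun k => isClosed_iInter fun _ =>
        isClosed_eq (by fun_prop) continuous_const
  · rintro R ⟨h0, hB, hp, hs⟩
    refine ⟨fun i k => h0 i k, fun i k => ?_⟩
    by_cases hi : i ∈ B
    · by_cases hk : π i k = true
      · have h := hs k ⟨i, hi, hk⟩
        have h2 := Finset.single_le_sum (f := fun i => R i k) (fun j _ => h0 j k)
          (Finset.mem_univ i)
        exact (h2.trans h.le).trans (le_abs_self _)
      · rw [hp i k (by simpa using hk)]; exact abs_nonneg _
    · rw [hB i k hi]; exact abs_nonneg _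

theorem cm4_nonempty {N K : ℕ} (B : Set (Fin N)) (π : Fin N → Fin K → Bool)
    (ρ : Fin K → ℝ) (hρ : ∀ k, 0 ≤ ρ k) : ∃ R, IsRateAlloc B π ρ R := by
  classical
  refine ⟨fun i k => if h : ∃ i ∈ B, π i k = true then
    (if i = h.choose then ρ k else 0) else 0, ?_, ?_, ?_, ?_⟩
  · intro i k
    dsimp only
    split_ifs <;> simp [hρ]
  · intro i k hi
    dsimp only
    split_ifs with h h2
    · exact absurd (h2 ▸ h.choose_spec.1) hi
    · rfl
    · rfl
  · intro i k hi
    dsimp only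
    split_ifs with h h2
    · have := h.choose_spec.2
      rw [← h2, hi] at this
      simp at this
    · rfl
    · rfl
  · intro k h
    simp only [dif_pos h]
    simp

theorem cm4_exchange {N K : ℕ} (B : Set (Fin N)) (π : Fin N → Fin K → Bool)
    (ρ : Fin K → ℝ) (φ : Fin N → ℝ) (hφ : ∀ i, 0 < φ i) (R : Fin N → Fin K → ℝ)
    (hR : IsRateAlloc B π ρ R)
    (hmin : ∀ R', IsRateAlloc B π ρ R' →
      ∑ i, totalRate R i ^ 2 / φ i ≤ ∑ i, totalRate R' i ^ 2 / φ i)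
    (a b : Fin N) (k : Fin K) (ha : 0 < R a k) (hb : b ∈ B) (hbk : π b k = true) :
    totalRate R a / φ a ≤ totalRate R b / φ b := by
  classical
  by_contra! hlt
  have hab : a ≠ b := by rintro rfl; exact lt_irrefl _ hlt
  obtain ⟨h0, hB, hp, hs⟩ := hR
  have haB : a ∈ B := by
    by_contra h
    rw [hB a k h] at ha; exact lt_irrefl _ ha
  have hak : π a k = true := by
    by_contra h
    rw [hp a k (by simpa using h)] at ha; exact lt_irrefl _ ha
  set d := totalRate R a / φ a - totalRate R b / φ b with hd
  have hdpos : 0 < d := sub_pos.2 hlt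
  set c := 1 / φ a + 1 / φ b with hc
  have hcpos : 0 < c := add_pos (one_div_pos.2 (hφ a)) (one_div_pos.2 (hφ b))
  obtain ⟨t, ht0, hta, htc⟩ : ∃ t, 0 < t ∧ t ≤ R a k ∧ t * c ≤ d :=
    ⟨min (R a k) (d / c), lt_min ha (div_pos hdpos hcpos), min_le_left _ _,
      (le_div_iff₀ hcpos).1 (min_le_right _ _)⟩
  let u : Fin N → ℝ := fun i => (if i = b then 1 else 0) - (if i = a then 1 else 0)
  have hua : u a = -1 := by simp [u, hab]
  have hub : u b = 1 := by simp [u, hab.symm]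
  have huo : ∀ i, i ≠ a → i ≠ b → u i = 0 := fun i h1 h2 => by simp [u, h1, h2]
  let R' : Fin N → Fin K → ℝ := fun i l => R i l + if l = k then t * u i else 0
  have hR' : IsRateAlloc B π ρ R' := by
    refine ⟨fun i l => ?_, fun i l hi => ?_, fun i l hi => ?_, fun l hl => ?_⟩
    · by_cases hl : l = k
      · subst hl
        simp only [R', if_true]
        by_cases h1 : i = a
        · subst h1; rw [hua]; linarith
        by_cases h2 : i = b
        · subst h2; rw [hub]; have := h0 i l; linarith
        rw [huo i h1 h2]; simpa using h0 i l
      · simpa [R', hl] using h0 i l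
    · have h1 : i ≠ a := by rintro rfl; exact hi haB
      have h2 : i ≠ b := by rintro rfl; exact hi hb
      simp [R', huo i h1 h2, hB i l hi]
    · by_cases hl : l = k
      · subst hl
        have h1 : i ≠ a := by rintro rfl; simp [hi] at hak
        have h2 : i ≠ b := by rintro rfl; simp [hi] at hbk
        simp [R', huo i h1 h2, hp i l hi]
      · simp [R', hl, hp i l hi]
    · simp only [R', Finset.sum_add_distrib, hs l hl]
      by_cases hl : l = k
      · simp [hl, ← Finset.mul_sum, u]
      · simp [hl]
  have htot : ∀ i, totalRate R' i = totalRate R i + t * u i := by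
    intro i
    simp [totalRate, R', Finset.sum_add_distrib]
  have key := hmin R' hR'
  have hexp : ∀ i, totalRate R' i ^ 2 / φ i = totalRate R i ^ 2 / φ i +
      ((if i = b then 2 * t * (totalRate R b / φ b) + t ^ 2 * (1 / φ b) else 0) +
       (if i = a then - 2 * t * (totalRate R a / φ a) + t ^ 2 * (1 / φ a) else 0)) := by
    intro i
    rw [htot]
    by_cases h1 : i = a
    · subst h1; rw [hua]; simp [hab]; ring
    by_cases h2 : i = b
    · subst h2; rw [hub]; simp [h1]; ring
    rw [huo i h1 h2]; simp [h1, h2]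
  simp only [hexp, Finset.sum_add_distrib, Finset.sum_ite_eq', Finset.mem_univ, if_true] at key
  have h3 : 0 ≤ t * (t * c - 2 * d) := by rw [hc, hd]; linarith
  have h4 : t * (t * c - 2 * d) < 0 := mul_neg_of_pos_of_neg ht0 (by linarith)
  linarith

/-- Existence: for every backlogged set, server rates, eligibility matrix
(with a `1` in every row and column) and positive weights, there exists a
CM4-fair rate allocation matrix. -/
theorem cm4fair_exists {N K : ℕ} (hN : 0 < N) (hK : 0 < K)
    (B : Set (Fin N)) (π : Fin N → Fin K → Bool) (ρ : Fin K → ℝ) (φ : Fin N → ℝ)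
    (hφ : ∀ i, 0 < φ i) (hρ : ∀ k, 0 ≤ ρ k)
    (hrow : ∀ i, ∃ k, π i k = true) (hcol : ∀ k, ∃ i, π i k = true) :
    ∃ R : Fin N → Fin K → ℝ, CM4Fair B π ρ φ R := by
  classical
  obtain ⟨R, hR, hmin⟩ := (cm4_isCompact B π ρ).exists_isMinOn (cm4_nonempty B π ρ hρ)
    (f := fun R => ∑ i, totalRate R i ^ 2 / φ i)
    (by unfold totalRate; fun_prop)
  have hex := cm4_exchange B π ρ φ hφ R hR (fun R' h => hmin h)
  refine ⟨R, hR, fun R' hR' i hi => ?_⟩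
  by_contra! hcon
  let S : Finset (Fin N) := univ.filter fun j => totalRate R j / φ j ≤ totalRate R i / φ i
  have hlt : ∑ j ∈ S, totalRate R j < ∑ j ∈ S, totalRate R' j := by
    apply Finset.sum_lt_sum
    · intro j hj
      exact (div_le_div_iff_of_pos_right (hφ j)).1 (hcon j (Finset.mem_filter.1 hj).2)
    · exact ⟨i, by simp [S], (div_lt_div_iff_of_pos_right (hφ i)).1 hi⟩
  unfold totalRate at hlt
  rw [Finset.sum_comm, Finset.sum_comm (s := S)] at hlt
  refine absurd hlt (not_lt.2 (Finset.sum_le_sum fun k _ => ?_))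
  by_cases h : ∃ s ∈ S, s ∈ B ∧ π s k = true
  · obtain ⟨s, hs, hsB, hsk⟩ := h
    have h1 : ∑ j ∈ S, R j k = ∑ j, R j k := by
      apply Finset.sum_subset (Finset.subset_univ _)
      intro j _ hj
      by_contra hne
      have := hex j s k (lt_of_le_of_ne (hR.1 j k) (Ne.symm hne)) hsB hsk
      exact hj (Finset.mem_filter.2 ⟨Finset.mem_univ _, this.trans (Finset.mem_filter.1 hs).2⟩)
    rw [h1, hR.2.2.2 k ⟨s, hsB, hsk⟩, ← hR'.2.2.2 k ⟨s, hsB, hsk⟩]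
    exact Finset.sum_le_sum_of_subset_of_nonneg (Finset.subset_univ _) fun j _ _ => hR'.1 j k
  · have hz : ∀ j ∈ S, R' j k = 0 := by
      intro j hj
      by_cases hjB : j ∈ B
      · apply hR'.2.2.1
        by_contra hk
        exact h ⟨j, hj, hjB, by simpa using hk⟩
      · exact hR'.2.1 j k hjB
    rw [Finset.sum_eq_zero hz]
    exact Finset.sum_nonneg fun j _ => hR.1 j k
end

section
/- Let {(I_m, S_m)}_{m=1}^{M} be an FOC for a CM4-fair rate allocation matrix R. If some user j ∈ I_m with positive total rate r_j > 0 is eligible to a server k in another cluster, i.e. π_{j,k} = 1 and k ∈ S_l with l ≠ m, then r^{C_m} > r^{C_l}. -/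
open Finset

/-- A Fairness Oriented Clustering (FOC) for a rate allocation matrix `R`:
a partition of users into `M` nonempty classes and of servers into `M`
pairwise disjoint classes, with a common normalized rate per cluster,
distinct cluster rates, and the server-membership characterization. -/
structure IsFOC {N K M : ℕ} (π : Fin N → Fin K → Bool) (φ : Fin N → ℝ)
    (R : Fin N → Fin K → ℝ)
    (I : Fin M → Finset (Fin N)) (S : Fin M → Finset (Fin K))
    (rC : Fin M → ℝ) : Prop where
  I_nonempty : ∀ m, (I m).Nonempty
  I_disjoint : ∀ m l, m ≠ l → Disjoint (I m) (I l)
  I_cover : ∀ i, ∃ m, i ∈ I m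
  S_disjoint : ∀ m l, m ≠ l → Disjoint (S m) (S l)
  S_cover : ∀ k, ∃ m, k ∈ S m
  rate_eq : ∀ m, ∀ i ∈ I m, totalRate R i / φ i = rC m
  rate_ne : ∀ m l, m ≠ l → rC m ≠ rC l
  server_iff : ∀ m k, (k ∈ S m ∧ 0 < rC m) ↔ ∃ i ∈ I m, 0 < R i k

/-- Corollary 2: if a user `j` in cluster `m` with positive total rate is
eligible to a server `k` of a different cluster `l`, then
`r^{C_m} > r^{C_l}`. -/
theorem foc_eligible_other_cluster {N K M : ℕ} (hN : 0 < N) (hK : 0 < K)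
    (B : Set (Fin N)) (π : Fin N → Fin K → Bool) (ρ : Fin K → ℝ) (φ : Fin N → ℝ)
    (hφ : ∀ i, 0 < φ i) (hρ : ∀ k, 0 ≤ ρ k)
    (hrow : ∀ i, ∃ k, π i k = true) (hcol : ∀ k, ∃ i, π i k = true)
    (R : Fin N → Fin K → ℝ) (hfair : CM4Fair B π ρ φ R)
    (I : Fin M → Finset (Fin N)) (S : Fin M → Finset (Fin K)) (rC : Fin M → ℝ)
    (hfoc : IsFOC π φ R I S rC)
    (m l : Fin M) (hml : l ≠ m)
    (j : Fin N) (hj : j ∈ I m) (hrj : 0 < totalRate R j)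
    (k : Fin K) (hπ : π j k = true) (hk : k ∈ S l) :
    rC l < rC m := by
  obtain ⟨⟨h0, hB, hE, hW⟩, hF⟩ := hfair
  have hm : 0 < rC m := by
    rw [← hfoc.rate_eq m j hj]
    exact div_pos hrj (hφ j)
  by_contra hcon
  have hlt : rC m < rC l := lt_of_le_of_ne (not_lt.mp hcon) (hfoc.rate_ne m l hml.symm)
  obtain ⟨i, hi, hik⟩ := (hfoc.server_iff l k).mp ⟨hk, hm.trans hlt⟩
  have hij : i ≠ j := by
    rintro rfl
    exact Finset.disjoint_left.mp (hfoc.I_disjoint l m hml) hi hj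
  have hjB : j ∈ B := by
    by_contra h
    have : totalRate R j = 0 := Finset.sum_eq_zero fun k _ => hB j k h
    linarith
  have hiB : i ∈ B := by
    by_contra h
    have := hB i k h
    linarith
  have hpi : π i k ≠ false := by
    intro h
    have := hE i k h
    linarith
  let R' : Fin N → Fin K → ℝ := fun a b =>
    R a b + (if b = k then (if a = j then R i k else 0) - (if a = i then R i k else 0) else 0)
  have hT : ∀ a, totalRate R' a = totalRate R a +
      ((if a = j then R i k else 0) - (if a = i then R i k else 0)) := by
    intro a
    simp only [totalRate, R', Finset.sum_add_distrib, Finset.sum_ite_eq', Finset.mem_univ, if_true]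
  have hR' : IsRateAlloc B π ρ R' := by
    refine ⟨?_, ?_, ?_, ?_⟩
    · intro a b
      have := h0 a b
      simp only [R']
      split_ifs with h1 h2 h3 h3
      · exact absurd (h3.symm.trans h2) hij
      · linarith
      · subst h1 h3; linarith
      · linarith
      · linarith
    · intro a b ha
      have h1 : a ≠ j := fun h => ha (h ▸ hjB)
      have h2 : a ≠ i := fun h => ha (h ▸ hiB)
      simp [R', h1, h2, hB a b ha]
    · intro a b ha
      have h3 := hE a b ha
      by_cases hb : b = k
      · subst hb
        have h1 : a ≠ j := by
          rintro rfl
          simp [hπ] at ha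
        have h2 : a ≠ i := by
          rintro rfl
          exact hpi ha
        simp [R', h1, h2, h3]
      · simp [R', hb, h3]
    · intro b hb
      rw [← hW b hb]
      by_cases h : b = k
      · simp [R', h, Finset.sum_add_distrib]
      · simp [R', h]
  obtain ⟨a, ha1, ha2⟩ := hF R' hR' j (by
    apply div_lt_div_of_pos_right _ (hφ j)
    rw [hT]
    simp [hij.symm, hik])
  by_cases hai : a = i
  · subst hai
    rw [hfoc.rate_eq l a hi, hfoc.rate_eq m j hj] at ha1
    linarith
  · have h1 := (div_lt_div_iff_of_pos_right (hφ a)).mp ha2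
    rw [hT, if_neg hai] at h1
    split_ifs at h1 <;> linarith
end

section
/- Let R be a CM4-fair rate allocation matrix. If i and j are backlogged users that both receive positive service from the same server k (i.e. r_{i,k} > 0 and r_{j,k} > 0), then their normalized total rates are equal: r_i/φ_i = r_j/φ_j. -/
open Finset

theorem cm4_aux {N K : ℕ}
    (B : Set (Fin N)) (π : Fin N → Fin K → Bool) (ρ : Fin K → ℝ) (φ : Fin N → ℝ)
    (hφ : ∀ i, 0 < φ i)
    (R : Fin N → Fin K → ℝ) (hfair : CM4Fair B π ρ φ R)
    (i j : Fin N) (hi : i ∈ B) (hj : j ∈ B) (k : Fin K)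
    (hik : 0 < R i k) (hjk : 0 < R j k) :
    totalRate R j / φ j ≤ totalRate R i / φ i := by
  by_contra hlt
  push Not at hlt
  obtain ⟨⟨h0, hB, hπ, hs⟩, hf⟩ := hfair
  have hij : i ≠ j := by
    rintro rfl
    exact lt_irrefl _ hlt
  have hpi : π i k ≠ false := fun h => hik.ne' (hπ i k h)
  have hpj : π j k ≠ false := fun h => hjk.ne' (hπ j k h)
  set d : Fin N → ℝ := fun a => (if a = i then R j k else 0) - (if a = j then R j k else 0) with hd
  have hdi : d i = R j k := by simp [hd, hij]
  have hd0 : ∀ a, a ≠ j → 0 ≤ d a := by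
    intro a ha
    simp only [hd, if_neg ha, sub_zero]
    split_ifs
    · exact hjk.le
    · exact le_rfl
  have hdz : ∀ a, a ≠ i → a ≠ j → d a = 0 := by
    intro a h1 h2
    simp [hd, h1, h2]
  have hdj : d j = - R j k := by simp [hd, hij.symm]
  have hdsum : ∑ a, d a = 0 := by simp [hd, Finset.sum_sub_distrib]
  set R' : Fin N → Fin K → ℝ := fun a b => R a b + (if b = k then d a else 0) with hR'
  have htot : ∀ a, totalRate R' a = totalRate R a + d a := by
    intro a
    simp [totalRate, hR', Finset.sum_add_distrib]
  have hall : IsRateAlloc B π ρ R' := by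
    refine ⟨?_, ?_, ?_, ?_⟩
    · intro a b
      by_cases hb : b = k
      · subst hb
        by_cases ha : a = j
        · subst ha
          simp [hR', hdj]
        · have := hd0 a ha
          have := h0 a b
          simp only [hR', if_true]
          linarith
      · simpa [hR', hb] using h0 a b
    · intro a b ha
      have h1 : a ≠ i := by rintro rfl; exact ha hi
      have h2 : a ≠ j := by rintro rfl; exact ha hj
      simp [hR', hdz a h1 h2, hB a b ha]
    · intro a b hab
      by_cases hb : b = k
      · subst hb
        have h1 : a ≠ i := by rintro rfl; exact hpi hab
        have h2 : a ≠ j := by rintro rfl; exact hpj hab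
        simp [hR', hdz a h1 h2, hπ a b hab]
      · simp [hR', hb, hπ a b hab]
    · intro b hb
      rw [← hs b hb]
      by_cases hbk : b = k
      · simp [hR', hbk, Finset.sum_add_distrib, hdsum]
      · simp [hR', hbk]
  obtain ⟨l, hl1, hl2⟩ := hf R' hall i (by
    apply div_lt_div_of_pos_right _ (hφ i)
    rw [htot, hdi]
    linarith)
  have hlj : l = j := by
    by_contra hne
    have h1 := (div_lt_div_iff_of_pos_right (hφ l)).1 hl2
    rw [htot] at h1
    linarith [hd0 l hne]
  subst hlj
  linarith

/-- If two backlogged users both receive positive service from the same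
server under a CM4-fair allocation, their normalized total rates coincide. -/
theorem cm4fair_same_server_same_rate {N K : ℕ} (hN : 0 < N) (hK : 0 < K)
    (B : Set (Fin N)) (π : Fin N → Fin K → Bool) (ρ : Fin K → ℝ) (φ : Fin N → ℝ)
    (hφ : ∀ i, 0 < φ i) (hρ : ∀ k, 0 ≤ ρ k)
    (hrow : ∀ i, ∃ k, π i k = true) (hcol : ∀ k, ∃ i, π i k = true)
    (R : Fin N → Fin K → ℝ) (hfair : CM4Fair B π ρ φ R)
    (i j : Fin N) (hi : i ∈ B) (hj : j ∈ B) (k : Fin K)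
    (hik : 0 < R i k) (hjk : 0 < R j k) :
    totalRate R i / φ i = totalRate R j / φ j := by
  exact le_antisymm (cm4_aux B π ρ φ hφ R hfair j i hj hi k hjk hik)
    (cm4_aux B π ρ φ hφ R hfair i j hi hj k hik hjk)
end

section
/- Let {(I_m, S_m)}_{m=1}^{M} be an FOC for a CM4-fair rate allocation matrix R, and let m, l be two cluster indices with r^{C_m} > r^{C_l}. Then no user i ∈ I_l with positive total rate r_i > 0 is eligible to any server of cluster m: π_{i,k} = 0 for every k ∈ S_m. -/
open Finset

/-- If cluster `m` has a strictly larger cluster rate than cluster `l`, then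
no user of cluster `l` with positive total rate is eligible to any server of
cluster `m`. -/
theorem foc_no_eligibility_to_faster_cluster {N K M : ℕ} (hN : 0 < N) (hK : 0 < K)
    (B : Set (Fin N)) (π : Fin N → Fin K → Bool) (ρ : Fin K → ℝ) (φ : Fin N → ℝ)
    (hφ : ∀ i, 0 < φ i) (hρ : ∀ k, 0 ≤ ρ k)
    (hrow : ∀ i, ∃ k, π i k = true) (hcol : ∀ k, ∃ i, π i k = true)
    (R : Fin N → Fin K → ℝ) (hfair : CM4Fair B π ρ φ R)
    (I : Fin M → Finset (Fin N)) (S : Fin M → Finset (Fin K)) (rC : Fin M → ℝ)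
    (hfoc : IsFOC π φ R I S rC)
    (m l : Fin M) (hrate : rC l < rC m)
    (i : Fin N) (hi : i ∈ I l) (hri : 0 < totalRate R i) :
    ∀ k ∈ S m, π i k = false := by
  intro k hk
  by_contra hπ
  have hπ : π i k = true := by simpa using hπ
  obtain ⟨⟨h0, hB, hel, hsum⟩, hf⟩ := hfair
  have hl : totalRate R i / φ i = rC l := hfoc.rate_eq l i hi
  have hlpos : 0 < rC l := hl ▸ div_pos hri (hφ i)
  obtain ⟨j, hj, hjk⟩ := (hfoc.server_iff m k).1 ⟨hk, hlpos.trans hrate⟩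
  have hm : totalRate R j / φ j = rC m := hfoc.rate_eq m j hj
  have hij : i ≠ j := by
    rintro rfl
    linarith
  have hiB : i ∈ B := by
    by_contra h
    have : totalRate R i = 0 := Finset.sum_eq_zero fun b _ => hB i b h
    linarith
  have hjB : j ∈ B := by
    by_contra h
    linarith [hB j k h]
  have hjπ : π j k = true := by
    by_contra h
    linarith [hel j k (by simpa using h)]
  let e : Fin N → ℝ := fun a => (if a = i then R j k else 0) - (if a = j then R j k else 0)
  let R' : Fin N → Fin K → ℝ := fun a b => R a b + if b = k then e a else 0
  have htot : ∀ a, totalRate R' a = totalRate R a + e a := by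
    intro a
    simp [totalRate, R', Finset.sum_add_distrib]
  have hes : ∑ a, e a = 0 := by
    simp [e, Finset.sum_sub_distrib]
  have hei : e i = R j k := by simp [e, hij]
  have hej : e j = - R j k := by simp [e, hij.symm]
  have heo : ∀ a, a ≠ i → a ≠ j → e a = 0 := by
    intro a h1 h2
    simp [e, h1, h2]
  have hR' : IsRateAlloc B π ρ R' := by
    refine ⟨?_, ?_, ?_, ?_⟩
    · intro a b
      have := h0 a b
      by_cases hb : b = k
      · subst hb
        by_cases h1 : a = i
        · subst h1
          simp only [R', if_true, hei]
          linarith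
        · by_cases h2 : a = j
          · subst h2
            simp [R', hej]
          · simpa [R', heo a h1 h2] using this
      · simpa [R', hb] using this
    · intro a b ha
      have h1 : a ≠ i := fun h => ha (h ▸ hiB)
      have h2 : a ≠ j := fun h => ha (h ▸ hjB)
      simp [R', heo a h1 h2, hB a b ha]
    · intro a b hab
      by_cases hb : b = k
      · subst hb
        have h1 : a ≠ i := by
          rintro rfl
          simp_all
        have h2 : a ≠ j := by
          rintro rfl
          simp_all
        simp [R', heo a h1 h2, hel a b hab]
      · simp [R', hb, hel a b hab]
    · intro b hb
      rw [← hsum b hb]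
      by_cases hbk : b = k
      · simp [R', hbk, Finset.sum_add_distrib, hes]
      · simp [R', hbk]
  obtain ⟨a, ha1, ha2⟩ := hf R' hR' i (by
    rw [htot, hei]
    exact div_lt_div_of_pos_right (by linarith) (hφ i))
  have haj : a ≠ j := by
    rintro rfl
    linarith
  have : totalRate R a ≤ totalRate R' a := by
    rw [htot]
    by_cases h1 : a = i
    · subst h1
      linarith
    · linarith [heo a h1 haj]
  exact absurd ha2 (not_lt.2 (div_le_div_of_nonneg_right this (hφ a).le))
end

section
/- Let {(I_m, S_m)}_{m=1}^{M} be an FOC for a CM4-fair rate allocation matrix R and let C = (I, S) = (I_m, S_m) be a cluster with cluster rate r^C > 0. Let Ŝ ⊆ S, let Î = {i ∈ I : π_{i,k} = 1 for some k ∈ Ŝ}, and set Ī = I \ Î and S̄ = S \ Ŝ. If Ī is nonempty, then Σ_{k ∈ S̄} ρ_k ≥ r^C · Σ_{i ∈ Ī} φ_i. -/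
open Finset

/-- In a cluster `C = (I m, S m)` of an FOC with positive cluster rate, for
any subset `Shat` of the cluster's servers, the users `Ibar` of the cluster
not eligible to any server of `Shat` can be sustained by the remaining
servers: `Σ_{k ∈ S m \ Shat} ρ_k ≥ r^C · Σ_{i ∈ Ibar} φ_i`. -/
theorem foc_subcluster_capacity_lower {N K M : ℕ} (hN : 0 < N) (hK : 0 < K)
    (B : Set (Fin N)) (π : Fin N → Fin K → Bool) (ρ : Fin K → ℝ) (φ : Fin N → ℝ)
    (hφ : ∀ i, 0 < φ i) (hρ : ∀ k, 0 ≤ ρ k)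
    (hrow : ∀ i, ∃ k, π i k = true) (hcol : ∀ k, ∃ i, π i k = true)
    (R : Fin N → Fin K → ℝ) (hfair : CM4Fair B π ρ φ R)
    (I : Fin M → Finset (Fin N)) (S : Fin M → Finset (Fin K)) (rC : Fin M → ℝ)
    (hfoc : IsFOC π φ R I S rC)
    (m : Fin M) (hr : 0 < rC m)
    (Shat : Finset (Fin K)) (hShat : Shat ⊆ S m)
    (Ihat Ibar : Finset (Fin N))
    (hIhat : ∀ i, i ∈ Ihat ↔ i ∈ I m ∧ ∃ k ∈ Shat, π i k = true)
    (hIbar : Ibar = I m \ Ihat)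
    (hne : Ibar.Nonempty) :
    rC m * ∑ i ∈ Ibar, φ i ≤ ∑ k ∈ S m \ Shat, ρ k := by
  obtain ⟨⟨h0, hB, hπ, hw⟩, -⟩ := hfair
  have hle : ∀ k, ∑ i ∈ Ibar, R i k ≤ ρ k := by
    intro k
    by_cases h : ∃ i ∈ B, π i k = true
    · rw [← hw k h]
      exact Finset.sum_le_sum_of_subset_of_nonneg (Finset.subset_univ _)
        (fun i _ _ => h0 i k)
    · have hz : ∀ i ∈ Ibar, R i k = 0 := by
        intro i _
        by_cases hi : i ∈ B
        · apply hπ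
          by_contra hc
          exact h ⟨i, hi, by simpa using hc⟩
        · exact hB i k hi
      rw [Finset.sum_eq_zero hz]
      exact hρ k
  have heq : ∀ i ∈ Ibar, rC m * φ i = ∑ k ∈ S m \ Shat, R i k := by
    intro i hi
    rw [hIbar, Finset.mem_sdiff] at hi
    obtain ⟨hi, hni⟩ := hi
    have h1 := hfoc.rate_eq m i hi
    rw [div_eq_iff (hφ i).ne'] at h1
    rw [← h1, totalRate]
    symm
    apply Finset.sum_subset (Finset.subset_univ _)
    intro k _ hk
    by_contra hc
    have hpos : 0 < R i k := lt_of_le_of_ne (h0 i k) (Ne.symm hc)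
    have hS := ((hfoc.server_iff m k).2 ⟨i, hi, hpos⟩).1
    apply hk
    rw [Finset.mem_sdiff]
    refine ⟨hS, fun hks => hni ((hIhat i).2 ⟨hi, k, hks, ?_⟩)⟩
    by_contra hp
    exact hc (hπ i k (by simpa using hp))
  rw [Finset.mul_sum, Finset.sum_congr rfl heq, Finset.sum_comm]
  exact Finset.sum_le_sum (fun k _ => hle k)
end

section
/- Let {(I_m, S_m)}_{m=1}^{M} be an FOC for a CM4-fair rate allocation matrix R and let C = (I, S) = (I_m, S_m) be a cluster with cluster rate r^C > 0. Let Ŝ ⊆ S be nonempty and let Î = {i ∈ I : π_{i,k} = 1 for some k ∈ Ŝ}. Then Σ_{k ∈ Ŝ} ρ_k ≤ r^C · Σ_{i ∈ Î} φ_i. -/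
open Finset

/-- In a cluster `C = (I m, S m)` of an FOC with positive cluster rate, for
any nonempty subset `Shat` of the cluster's servers, its total capacity is
at most `r^C` times the total weight of the users of the cluster eligible to
some server of `Shat`. -/
theorem foc_subcluster_capacity_upper {N K M : ℕ} (hN : 0 < N) (hK : 0 < K)
    (B : Set (Fin N)) (π : Fin N → Fin K → Bool) (ρ : Fin K → ℝ) (φ : Fin N → ℝ)
    (hφ : ∀ i, 0 < φ i) (hρ : ∀ k, 0 ≤ ρ k)
    (hrow : ∀ i, ∃ k, π i k = true) (hcol : ∀ k, ∃ i, π i k = true)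
    (R : Fin N → Fin K → ℝ) (hfair : CM4Fair B π ρ φ R)
    (I : Fin M → Finset (Fin N)) (S : Fin M → Finset (Fin K)) (rC : Fin M → ℝ)
    (hfoc : IsFOC π φ R I S rC)
    (m : Fin M) (hr : 0 < rC m)
    (Shat : Finset (Fin K)) (hShat : Shat ⊆ S m) (hSne : Shat.Nonempty)
    (Ihat : Finset (Fin N))
    (hIhat : ∀ i, i ∈ Ihat ↔ i ∈ I m ∧ ∃ k ∈ Shat, π i k = true) :
    ∑ k ∈ Shat, ρ k ≤ rC m * ∑ i ∈ Ihat, φ i := by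
  obtain ⟨⟨hnn, hB, hπ, hsum⟩, -⟩ := hfair
  have key : ∀ k ∈ Shat, ρ k = ∑ i ∈ Ihat, R i k := by
    intro k hk
    obtain ⟨i0, _, h0⟩ := (hfoc.server_iff m k).1 ⟨hShat hk, hr⟩
    have e1 : ∀ i, 0 < R i k → π i k = true := by
      intro i hi
      by_contra h
      have := hπ i k (by simpa using h)
      linarith
    have hb : i0 ∈ B := by
      by_contra h
      have := hB i0 k h
      linarith
    rw [← hsum k ⟨i0, hb, e1 i0 h0⟩]
    symm
    apply Finset.sum_subset (Finset.subset_univ _)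
    intro i _ hi
    by_contra hne
    have hpos : 0 < R i k := lt_of_le_of_ne (hnn i k) (Ne.symm hne)
    obtain ⟨l, hl⟩ := hfoc.I_cover i
    have hkl := ((hfoc.server_iff l k).2 ⟨i, hl, hpos⟩).1
    have hlm : l = m := by
      by_contra hlm
      exact (Finset.disjoint_left.1 (hfoc.S_disjoint l m hlm)) hkl (hShat hk)
    subst hlm
    exact hi ((hIhat i).2 ⟨hl, k, hk, e1 i hpos⟩)
  rw [Finset.sum_congr rfl key, Finset.sum_comm, Finset.mul_sum]
  apply Finset.sum_le_sum
  intro i hi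
  have h1 := hfoc.rate_eq m i ((hIhat i).1 hi).1
  rw [div_eq_iff (hφ i).ne'] at h1
  rw [← h1]
  exact Finset.sum_le_sum_of_subset_of_nonneg (Finset.subset_univ _) (fun k _ _ => hnn i k)
end

section
/- Let I be a nonempty finite index set with |I| = N, let φ_i > 0 for i ∈ I, let L ≥ 0, and let F_i^0, F_i^1 (i ∈ I) and V^0, V^1 be real numbers satisfying: F_i^0 ≥ V^0 for all i ∈ I; F_i^1 ≤ V^1 + L/φ_i for all i ∈ I; and F_{i*}^1 = V^1 for some i* ∈ I. Define W_i = φ_i (F_i^1 − F_i^0). Then (Σ_{i∈I} φ_i)(V^1 − V^0) ≥ Σ_{i∈I} W_i − (N − 1)·L. Moreover, if additionally Σ_{i∈I} W_i ≥ P − L for a real number P, then (Σ_{i∈I} φ_i)(V^1 − V^0) ≥ P − N·L. -/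
open Finset

/-- Algebraic core of the single-server lower bound (Lemma 7): if every tag
at time 0 is at least the work level `V0`, every tag at time 1 is at most
`V1 + L/φ_i`, and some tag at time 1 equals `V1`, then the increase of the
work level, scaled by the total weight, is at least the total allocated work
minus `(N-1)·L`; and if moreover `Σ W_i ≥ P - L`, it is at least `P - N·L`. -/
theorem single_server_work_level_lower {α : Type*} [DecidableEq α]
    (I : Finset α) (hI : I.Nonempty)
    (φ F0 F1 : α → ℝ) (V0 V1 L : ℝ)
    (hφ : ∀ i ∈ I, 0 < φ i) (hL : 0 ≤ L)
    (h0 : ∀ i ∈ I, V0 ≤ F0 i)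
    (h1 : ∀ i ∈ I, F1 i ≤ V1 + L / φ i)
    (hmin : ∃ i ∈ I, F1 i = V1)
    (W : α → ℝ) (hW : ∀ i ∈ I, W i = φ i * (F1 i - F0 i)) :
    (∑ i ∈ I, W i) - ((I.card : ℝ) - 1) * L ≤ (∑ i ∈ I, φ i) * (V1 - V0) ∧
    ∀ P : ℝ, P - L ≤ ∑ i ∈ I, W i →
      P - (I.card : ℝ) * L ≤ (∑ i ∈ I, φ i) * (V1 - V0) := by
  have key : (∑ i ∈ I, W i) - ((I.card : ℝ) - 1) * L ≤ (∑ i ∈ I, φ i) * (V1 - V0) := by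
    obtain ⟨j, hj, hjV⟩ := hmin
    have hs : ∑ i ∈ I, W i ≤ ∑ i ∈ I, (φ i * (V1 - V0) + (L - if i = j then L else 0)) := by
      apply Finset.sum_le_sum
      intro i hi
      have hp := hφ i hi
      have a0 := mul_le_mul_of_nonneg_left (h0 i hi) hp.le
      rw [hW i hi]
      by_cases hij : i = j
      · rw [if_pos hij]
        subst hij
        rw [hjV]
        linarith
      · rw [if_neg hij]
        have a1 := mul_le_mul_of_nonneg_left (h1 i hi) hp.le
        have e : φ i * (V1 + L / φ i) = φ i * V1 + L := by
          field_simp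
        linarith
    rw [Finset.sum_add_distrib, Finset.sum_sub_distrib, Finset.sum_ite_eq' I j, if_pos hj,
      ← Finset.sum_mul, Finset.sum_const, nsmul_eq_mul] at hs
    linarith
  refine ⟨key, fun P hP => ?_⟩
  linarith
end

section
/- Let Ĩ be a nonempty finite index set with |Ĩ| = n, let φ_i > 0 for i ∈ Ĩ, let L ≥ 0, and let F_i^0, F_i^1 (i ∈ Ĩ) and V^0, V^1 be real numbers satisfying: F_{i*}^0 = V^0 for some i* ∈ Ĩ; F_i^1 ≥ V^1 for all i ∈ Ĩ; and F_i^0 ≤ V^0 + L/φ_i for all i ∈ Ĩ. Define W_i = φ_i (F_i^1 − F_i^0). Then (Σ_{i∈Ĩ} φ_i)(V^1 − V^0) ≤ Σ_{i∈Ĩ} W_i + (n − 1)·L. Moreover, if additionally Σ_{i∈Ĩ} W_i ≤ P + L for a real number P, then (Σ_{i∈Ĩ} φ_i)(V^1 − V^0) ≤ P + n·L. -/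
open Finset

/-- Algebraic core of the single-server upper bound (Lemma 8): if some tag at
time 0 equals the work level `V0`, every tag at time 1 is at least `V1`, and
every tag at time 0 is at most `V0 + L/φ_i`, then the increase of the work
level, scaled by the total weight, is at most the total allocated work plus
`(n-1)·L`; and if moreover `Σ W_i ≤ P + L`, it is at most `P + n·L`. -/
theorem single_server_work_level_upper {α : Type*} [DecidableEq α]
    (I : Finset α) (hI : I.Nonempty)
    (φ F0 F1 : α → ℝ) (V0 V1 L : ℝ)
    (hφ : ∀ i ∈ I, 0 < φ i) (hL : 0 ≤ L)
    (hmin : ∃ i ∈ I, F0 i = V0)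
    (h1 : ∀ i ∈ I, V1 ≤ F1 i)
    (h0 : ∀ i ∈ I, F0 i ≤ V0 + L / φ i)
    (W : α → ℝ) (hW : ∀ i ∈ I, W i = φ i * (F1 i - F0 i)) :
    (∑ i ∈ I, φ i) * (V1 - V0) ≤ (∑ i ∈ I, W i) + ((I.card : ℝ) - 1) * L ∧
    ∀ P : ℝ, (∑ i ∈ I, W i) ≤ P + L →
      (∑ i ∈ I, φ i) * (V1 - V0) ≤ P + (I.card : ℝ) * L := by
  have key : (∑ i ∈ I, φ i) * (V1 - V0) ≤ (∑ i ∈ I, W i) + ((I.card : ℝ) - 1) * L := by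
    obtain ⟨j, hj, hjV⟩ := hmin
    have hb : ∀ i ∈ I, φ i * (V1 - V0) ≤ W i + L := by
      intro i hi
      have hp := hφ i hi
      have e : φ i * (L / φ i) = L := by field_simp
      have a := mul_le_mul_of_nonneg_left (h1 i hi) hp.le
      have b := mul_le_mul_of_nonneg_left (h0 i hi) hp.le
      rw [hW i hi]
      rw [mul_add, e] at b
      linarith
    have hjb : φ j * (V1 - V0) ≤ W j := by
      rw [hW j hj, hjV]
      exact mul_le_mul_of_nonneg_left (by linarith [h1 j hj]) (hφ j hj).le
    have hs : ∑ i ∈ I.erase j, φ i * (V1 - V0) ≤ ∑ i ∈ I.erase j, (W i + L) :=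
      Finset.sum_le_sum fun i hi => hb i (Finset.mem_of_mem_erase hi)
    have hc : ((I.erase j).card : ℝ) = (I.card : ℝ) - 1 := by
      rw [← Finset.card_erase_add_one hj]
      push_cast
      ring
    rw [Finset.sum_add_distrib, Finset.sum_const, nsmul_eq_mul, hc] at hs
    rw [Finset.sum_mul, ← Finset.add_sum_erase I _ hj, ← Finset.add_sum_erase I W hj]
    linarith
  refine ⟨key, fun P hP => ?_⟩
  linarith
end

section
/- Let R be a CM4-fair rate allocation matrix. If user i is backlogged (i ∈ B) and there exists a server k with π_{i,k} = 1 and ρ_k > 0, then the total rate of user i is positive: r_i > 0. -/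
open Finset

/-- Under a CM4-fair allocation, a backlogged user eligible to some server of
positive rate receives a positive total rate. -/
theorem cm4fair_pos_rate {N K : ℕ} (hN : 0 < N) (hK : 0 < K)
    (B : Set (Fin N)) (π : Fin N → Fin K → Bool) (ρ : Fin K → ℝ) (φ : Fin N → ℝ)
    (hφ : ∀ i, 0 < φ i) (hρ : ∀ k, 0 ≤ ρ k)
    (hrow : ∀ i, ∃ k, π i k = true) (hcol : ∀ k, ∃ i, π i k = true)
    (R : Fin N → Fin K → ℝ) (hfair : CM4Fair B π ρ φ R)
    (i : Fin N) (hi : i ∈ B) (k : Fin K) (hπ : π i k = true) (hk : 0 < ρ k) :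
    0 < totalRate R i := by
  obtain ⟨⟨h0, hB, hE, hS⟩, hmax⟩ := hfair
  by_contra hneg
  have htot : ∀ (T : Fin N → Fin K → ℝ), (∀ a b, 0 ≤ T a b) → ∀ j, 0 ≤ totalRate T j :=
    fun T hT j => Finset.sum_nonneg fun b _ => hT j b
  have hz : totalRate R i = 0 := le_antisymm (not_lt.mp hneg) (htot R h0 i)
  let R' : Fin N → Fin K → ℝ := fun j l =>
    if l = k then R j l / 2 + (if j = i then ρ k / 2 else 0) else R j l
  have h0' : ∀ j l, 0 ≤ R' j l := by
    intro j l
    have := h0 j l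
    simp only [R']
    split_ifs <;> linarith
  have hR' : IsRateAlloc B π ρ R' := by
    refine ⟨h0', ?_, ?_, ?_⟩
    · intro j l hj
      have hji : j ≠ i := fun h => hj (h ▸ hi)
      simp [R', hji, hB j l hj]
    · intro j l hj
      have h := hE j l hj
      simp only [R']
      split_ifs with h1 h2
      · subst h1 h2
        simp [hπ] at hj
      · simp [h]
      · exact h
    · intro l hl
      have h := hS l hl
      by_cases h1 : l = k
      · subst h1
        simp only [R', if_true, Finset.sum_add_distrib, ← Finset.sum_div, h]
        simp
      · simpa [R', h1] using h
  have hpos : 0 < totalRate R' i := by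
    have h1 : R' i k ≤ totalRate R' i :=
      Finset.single_le_sum (f := fun l => R' i l) (fun l _ => h0' i l) (Finset.mem_univ k)
    have h2 : 0 < R' i k := by
      have := h0 i k
      simp only [R', if_true]
      linarith
    linarith
  obtain ⟨j, hj1, hj2⟩ := hmax R' hR' i (by
    rw [hz, zero_div]
    exact div_pos hpos (hφ i))
  rw [hz, zero_div] at hj1
  have := div_nonneg (htot R' h0' j) (hφ j).le
  linarith
end

section
/- Let {(I_m, S_m)}_{m=1}^{M} be an FOC for a CM4-fair rate allocation matrix R, and let (I_m, S_m) be a cluster with cluster rate r^{C_m} > 0. Then the cluster's capacity is exactly consumed by its users: Σ_{k ∈ S_m} ρ_k = r^{C_m} · Σ_{i ∈ I_m} φ_i. -/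
open Finset

/-- In an FOC, the capacity of a cluster of positive rate is exactly consumed
by its users: `Σ_{k ∈ S_m} ρ_k = r^{C_m} · Σ_{i ∈ I_m} φ_i`. -/
theorem foc_cluster_capacity {N K M : ℕ} (hN : 0 < N) (hK : 0 < K)
    (B : Set (Fin N)) (π : Fin N → Fin K → Bool) (ρ : Fin K → ℝ) (φ : Fin N → ℝ)
    (hφ : ∀ i, 0 < φ i) (hρ : ∀ k, 0 ≤ ρ k)
    (hrow : ∀ i, ∃ k, π i k = true) (hcol : ∀ k, ∃ i, π i k = true)
    (R : Fin N → Fin K → ℝ) (hfair : CM4Fair B π ρ φ R)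
    (I : Fin M → Finset (Fin N)) (S : Fin M → Finset (Fin K)) (rC : Fin M → ℝ)
    (hfoc : IsFOC π φ R I S rC)
    (m : Fin M) (hr : 0 < rC m) :
    ∑ k ∈ S m, ρ k = rC m * ∑ i ∈ I m, φ i := by
  obtain ⟨⟨hnn, hB, hπ, hsum⟩, -⟩ := hfair
  have h1 : ∀ k ∈ S m, ρ k = ∑ i ∈ I m, R i k := by
    intro k hk
    obtain ⟨i, hi, hpos⟩ := (hfoc.server_iff m k).1 ⟨hk, hr⟩
    have hiB : i ∈ B := by
      by_contra h
      exact hpos.ne' (hB i k h)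
    have hiπ : π i k = true := by
      by_contra h
      exact hpos.ne' (hπ i k (by simpa using h))
    rw [← hsum k ⟨i, hiB, hiπ⟩]
    symm
    apply Finset.sum_subset (Finset.subset_univ _)
    intro j _ hj
    by_contra hne
    have hjpos : 0 < R j k := lt_of_le_of_ne (hnn j k) (Ne.symm hne)
    obtain ⟨l, hl⟩ := hfoc.I_cover j
    have hkl := ((hfoc.server_iff l k).2 ⟨j, hl, hjpos⟩).1
    have hml : m ≠ l := by
      rintro rfl
      exact hj hl
    exact Finset.disjoint_left.1 (hfoc.S_disjoint m l hml) hk hkl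
  rw [Finset.sum_congr rfl h1, Finset.sum_comm, Finset.mul_sum]
  apply Finset.sum_congr rfl
  intro i hi
  have h2 : totalRate R i = rC m * φ i := by
    rw [← hfoc.rate_eq m i hi, div_mul_cancel₀ _ (hφ i).ne']
  rw [← h2]
  apply Finset.sum_subset (Finset.subset_univ _)
  intro k _ hk
  by_contra hne
  have hpos : 0 < R i k := lt_of_le_of_ne (hnn i k) (Ne.symm hne)
  exact hk ((hfoc.server_iff m k).2 ⟨i, hi, hpos⟩).1
end

section
/- Consider N = 4 users {a, b, c, d} and K = 2 servers with rates ρ_1 = 5/2 and ρ_2 = 1, all weights equal to 1, eligibility π_{a,1} = π_{b,1} = 1, π_{a,2} = π_{b,2} = 0, π_{c,2} = 1, π_{c,1} = 0, π_{d,1} = π_{d,2} = 1, and all four users backlogged (B = {a, b, c, d}). Then the rate allocation matrix R with r_{a,1} = r_{b,1} = 7/8, r_{d,1} = 3/4, r_{d,2} = 1/8, r_{c,2} = 7/8 and all other entries 0 is CM4-fair; consequently every CM4-fair rate allocation matrix for this instance gives every user total rate 7/8. -/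
open Finset

/-- The example of Fig. 4 (all four users backlogged): users `a = 0`, `b = 1`,
`c = 2`, `d = 3`; servers `1 = 0` (rate 5/2) and `2 = 1` (rate 1). Users `a`,
`b` only use server 1, user `c` only server 2, user `d` both. The allocation
`r_{a,1} = r_{b,1} = 7/8`, `r_{d,1} = 3/4`, `r_{d,2} = 1/8`, `r_{c,2} = 7/8`
is CM4-fair, and every CM4-fair allocation gives every user total rate 7/8. -/
theorem example_four_users_all_backlogged :
    let π : Fin 4 → Fin 2 → Bool := fun i k =>
      if i.val ≤ 1 then k.val == 0 else if i.val = 2 then k.val == 1 else true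
    let ρ : Fin 2 → ℝ := fun k => if k.val = 0 then 5/2 else 1
    let φ : Fin 4 → ℝ := fun _ => 1
    let B : Set (Fin 4) := Set.univ
    let R : Fin 4 → Fin 2 → ℝ := fun i k =>
      if i.val ≤ 1 then (if k.val = 0 then 7/8 else 0)
      else if i.val = 2 then (if k.val = 1 then 7/8 else 0)
      else (if k.val = 0 then 3/4 else 1/8)
    CM4Fair B π ρ φ R ∧
      ∀ R' : Fin 4 → Fin 2 → ℝ, CM4Fair B π ρ φ R' →
        ∀ i, totalRate R' i = 7/8 := by
  intro π ρ φ B R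
  have hsum : ∀ R' : Fin 4 → Fin 2 → ℝ, IsRateAlloc B π ρ R' →
      totalRate R' 0 + totalRate R' 1 + totalRate R' 2 + totalRate R' 3 = 7/2 := by
    intro R' h
    obtain ⟨-, -, -, h4⟩ := h
    have h0 := h4 0 ⟨3, trivial, by simp [π]⟩
    have h1 := h4 1 ⟨3, trivial, by simp [π]⟩
    simp only [Fin.sum_univ_four] at h0 h1
    have e0 : ρ 0 = 5/2 := by simp [ρ]
    have e1 : ρ 1 = 1 := by simp [ρ]
    rw [e0] at h0
    rw [e1] at h1
    simp only [totalRate, Fin.sum_univ_two]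
    linarith
  have hR : ∀ i, totalRate R i = 7/8 := by
    intro i
    fin_cases i <;> simp [totalRate, R, Fin.sum_univ_two] <;> norm_num
  have hA : IsRateAlloc B π ρ R := by
    refine ⟨?_, ?_, ?_, ?_⟩
    · intro i k
      fin_cases i <;> fin_cases k <;> simp [R] <;> norm_num
    · intro i k h
      exact absurd trivial h
    · intro i k
      fin_cases i <;> fin_cases k <;> simp [R, π]
    · intro k _
      fin_cases k <;> simp [Fin.sum_univ_four, R, ρ] <;> norm_num
  refine ⟨⟨hA, ?_⟩, ?_⟩
  · intro R' h i hi
    simp only [φ, div_one, hR] at hi ⊢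
    by_contra hc
    push Not at hc
    have hs := hsum R' h
    have a0 := hc 0 le_rfl
    have a1 := hc 1 le_rfl
    have a2 := hc 2 le_rfl
    have a3 := hc 3 le_rfl
    fin_cases i <;> simp at hi <;> linarith
  · intro R' h
    have hs := hsum R' h.1
    have hge : ∀ i, 7/8 ≤ totalRate R' i := by
      intro i
      by_contra hc
      push Not at hc
      obtain ⟨j, hj1, hj2⟩ := h.2 R hA i (by simpa only [φ, div_one, hR] using hc)
      simp only [φ, div_one, hR] at hj1 hj2
      linarith
    have a0 := hge 0
    have a1 := hge 1
    have a2 := hge 2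
    have a3 := hge 3
    intro i
    fin_cases i <;> simp <;> linarith
end
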